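/- Assume additionally that B_{∅,c} = 1 if c = ∅ and B_{∅,c} = 0 otherwise. Then S·U is an absorbing Markov chain: S·U is stochastic, and from every state (a,b) there exist n ≥ 0 and b' ∈ Finset Pk such that ((S·U)^n)_{(a,b),(∅,b')} > 0 and (∅,b') is an absorbing state of S·U. -/

import Mathlib

open scoped Classical

/-! The second component of a state never decreases along positive entries of `S`, so a state
reachable from `p` whose second component is maximal is saturated: every state reaches a saturated
one. If `S p q > 0`, then `S * U` can move from `p` either to `q` itself or, when `q` is saturated,
directly to `(∅, q.2)`; hence the property of reaching some `(∅, b)` under `S * U` propagates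
backwards along `S`-paths, from saturated states to all states. -/

open Matrix Relation

section Reachability

variable {n R : Type*}

/-- Accessibility of states in the transition graph of `M`, whose edges are the positive entries. -/
abbrev Reaches [Zero R] [LT R] (M : Matrix n n R) : n → n → Prop :=
  ReflTransGen fun i j => 0 < M i j

/-- An absorbing state of a Markov chain with transition matrix `M`: the chain never leaves `i`. -/
def IsAbsorbing [Zero R] [One R] [DecidableEq n] (M : Matrix n n R) (i : n) : Prop :=
  ∀ j, M i j = if j = i then 1 else 0

theorem IsAbsorbing.mul [NonAssocSemiring R] [Fintype n] [DecidableEq n] {M N : Matrix n n R}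
    {i : n} (hM : IsAbsorbing M i) (hN : IsAbsorbing N i) : IsAbsorbing (M * N) i := by
  intro j
  simp [mul_apply, hM _, hN j]

variable [Semiring R] [PartialOrder R] [IsStrictOrderedRing R]

theorem mul_apply_pos_iff {l m : Type*} [Fintype m] {M : Matrix l m R} {N : Matrix m n R}
    (hM : ∀ i j, 0 ≤ M i j) (hN : ∀ i j, 0 ≤ N i j) {i : l} {k : n} :
    0 < (M * N) i k ↔ ∃ j, 0 < M i j ∧ 0 < N j k := by
  rw [mul_apply, Finset.sum_pos_iff_of_nonneg fun j _ => mul_nonneg (hM i j) (hN j k)]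
  constructor
  · rintro ⟨j, -, hj⟩
    exact ⟨j, (hM i j).lt_of_ne' (left_ne_zero_of_mul hj.ne'),
      (hN j k).lt_of_ne' (right_ne_zero_of_mul hj.ne')⟩
  · rintro ⟨j, hMj, hNj⟩
    exact ⟨j, Finset.mem_univ j, mul_pos hMj hNj⟩

theorem reaches_iff_exists_pow_pos [Fintype n] [DecidableEq n] {M : Matrix n n R}
    (hM : ∀ i j, 0 ≤ M i j) {i j : n} : Reaches M i j ↔ ∃ k : ℕ, 0 < (M ^ k) i j := by
  have pow_succ_pos_iff (k : ℕ) (j : n) :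
      0 < (M ^ (k + 1)) i j ↔ ∃ l, 0 < (M ^ k) i l ∧ 0 < M l j := by
    rw [pow_succ, mul_apply_pos_iff (pow_apply_nonneg hM k) hM]
  constructor
  · intro h
    induction h with
    | refl => exact ⟨0, by simp⟩
    | tail _ hstep ih =>
      obtain ⟨k, hk⟩ := ih
      exact ⟨k + 1, (pow_succ_pos_iff k _).2 ⟨_, hk, hstep⟩⟩
  · rintro ⟨k, hk⟩
    induction k generalizing j with
    | zero =>
      obtain rfl : i = j := by
        by_contra hij
        simp [hij] at hk
      exact .refl
    | succ k ih =>
      obtain ⟨l, hil, hlj⟩ := (pow_succ_pos_iff k j).1 hk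
      exact (ih hil).tail hlj

end Reachability

section Stochastic

variable {n R : Type*} [Fintype n] [DecidableEq n] [Semiring R] [PartialOrder R]

theorem one_submatrix_mem_rowStochastic [IsOrderedRing R] (g : n → n) :
    (1 : Matrix n n R).submatrix g id ∈ rowStochastic R n := by
  have h_one := one_mem (rowStochastic R n)
  refine mem_rowStochastic_iff_sum.2 ⟨fun _ _ => ?_, fun i => ?_⟩
  · exact nonneg_of_mem_rowStochastic h_one
  · exact sum_row_of_mem_rowStochastic h_one (g i)

theorem exists_pos_of_mem_rowStochastic [IsOrderedRing R] [Nontrivial R] {M : Matrix n n R}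
    (hM : M ∈ rowStochastic R n) (i : n) : ∃ j, 0 < M i j := by
  have h_sum : 0 < ∑ j, M i j := by
    rw [sum_row_of_mem_rowStochastic hM]
    exact zero_lt_one
  simpa using
    (Finset.sum_pos_iff_of_nonneg fun _ _ => nonneg_of_mem_rowStochastic hM).1 h_sum

end Stochastic

section Saturation

variable {α β R : Type*}

/-- A state is saturated if its second component is constant along every path from it; the powers
of `S` in the paper's definition are encoded by `Reaches`. -/
def IsSaturated [Zero R] [LT R] (S : Matrix (α × β) (α × β) R) (p : α × β) : Prop :=
  ∀ q, Reaches S p q → q.2 = p.2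

/-- The map underlying the paper's matrix `U`: it resets the first component of a saturated state
to `o` and fixes every other state. -/
noncomputable def collapse [Zero R] [LT R] (S : Matrix (α × β) (α × β) R) (o : α) (p : α × β) :
    α × β :=
  if IsSaturated S p then (o, p.2) else p

/-- The paper's matrix `U`, as the deterministic transition matrix of `collapse S o`. -/
noncomputable def saturationMatrix [Zero R] [One R] [LT R] [DecidableEq α] [DecidableEq β]
    (S : Matrix (α × β) (α × β) R) (o : α) : Matrix (α × β) (α × β) R :=
  (1 : Matrix (α × β) (α × β) R).submatrix (collapse S o) id

section Support

variable [Zero R] [LT R] {S : Matrix (α × β) (α × β) R} {p q : α × β}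

theorem IsSaturated.of_reaches (hp : IsSaturated S p) (hpq : Reaches S p q) : IsSaturated S q :=
  fun r hqr => (hp r (hpq.trans hqr)).trans (hp q hpq).symm

theorem snd_le_of_reaches [Preorder β] (hmono : ∀ p q, 0 < S p q → p.2 ≤ q.2)
    (h : Reaches S p q) : p.2 ≤ q.2 := by
  simpa only [reflTransGen_eq_self] using h.lift (p := (· ≤ ·)) Prod.snd hmono

theorem exists_reaches_isSaturated [PartialOrder β] [WellFoundedGT β]
    (hmono : ∀ p q, 0 < S p q → p.2 ≤ q.2) (p : α × β) :
    ∃ q, Reaches S p q ∧ IsSaturated S q := by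
  obtain ⟨q, hpq, hmax⟩ := exists_maximalFor_of_wellFoundedGT (Reaches S p) Prod.snd ⟨p, .refl⟩
  refine ⟨q, hpq, fun r hqr => ?_⟩
  have hle : q.2 ≤ r.2 := snd_le_of_reaches hmono hqr
  exact (hmax (hpq.trans hqr) hle).antisymm hle

end Support

theorem isAbsorbing_saturationMatrix [Zero R] [One R] [LT R] [DecidableEq α] [DecidableEq β]
    (S : Matrix (α × β) (α × β) R) (o : α) (b : β) :
    IsAbsorbing (saturationMatrix S o) (o, b) := by
  have h_fixed : collapse S o (o, b) = (o, b) := ite_self _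
  intro q
  simp [saturationMatrix, h_fixed, one_apply, eq_comm]

variable [Semiring R] [PartialOrder R] [IsStrictOrderedRing R] [Fintype α] [Fintype β]
  [DecidableEq α] [DecidableEq β] {S : Matrix (α × β) (α × β) R} {o : α} {p q : α × β}

theorem eq_saturationMatrix {U : Matrix (α × β) (α × β) R} {Saturated : α × β → Prop}
    (hS : ∀ p q, 0 ≤ S p q)
    (hSat : ∀ a b, Saturated (a, b) ↔
      ∀ (n : ℕ) (a' : α) (b' : β), 0 < (S ^ n) (a, b) (a', b') → b' = b)
    (hU : ∀ a b a' b', U (a, b) (a', b') =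
      if b' = b ∧ ((Saturated (a, b) ∧ a' = o) ∨ (¬ Saturated (a, b) ∧ a' = a)) then 1 else 0) :
    U = saturationMatrix S o := by
  have hSat' (a : α) (b : β) : Saturated (a, b) ↔ IsSaturated S (a, b) := by
    simp only [hSat, IsSaturated, reaches_iff_exists_pow_pos hS, Prod.forall, forall_exists_index]
    exact ⟨fun h a' b' n => h n a' b', fun h n a' b' => h a' b' n⟩
  ext ⟨a, b⟩ ⟨a', b'⟩
  by_cases h : IsSaturated S (a, b) <;>
    simp [hU, hSat', saturationMatrix, collapse, one_apply, h, and_comm, eq_comm]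

theorem mul_saturationMatrix_mem_rowStochastic (hS : S ∈ rowStochastic R (α × β)) :
    S * saturationMatrix S o ∈ rowStochastic R (α × β) :=
  mul_mem hS (one_submatrix_mem_rowStochastic _)

theorem mul_saturationMatrix_apply_pos (hS : ∀ p q, 0 ≤ S p q) (hpq : 0 < S p q) :
    0 < (S * saturationMatrix S o) p (collapse S o q) := by
  have hU : ∀ p q, 0 ≤ saturationMatrix S o p q := fun _ _ =>
    nonneg_of_mem_rowStochastic (one_submatrix_mem_rowStochastic _)
  exact (mul_apply_pos_iff hS hU).2 ⟨q, hpq, by simp [saturationMatrix, one_apply]⟩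

theorem mul_saturationMatrix_apply_pos_of_isSaturated (hS : ∀ p q, 0 ≤ S p q) (hpq : 0 < S p q)
    (hq : IsSaturated S q) : 0 < (S * saturationMatrix S o) p (o, q.2) := by
  simpa only [collapse, if_pos hq] using mul_saturationMatrix_apply_pos (o := o) hS hpq

theorem mul_saturationMatrix_apply_pos_of_not_isSaturated (hS : ∀ p q, 0 ≤ S p q)
    (hpq : 0 < S p q) (hq : ¬ IsSaturated S q) : 0 < (S * saturationMatrix S o) p q := by
  simpa only [collapse, if_neg hq] using mul_saturationMatrix_apply_pos (o := o) hS hpq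

theorem exists_reaches_mul_saturationMatrix_of_isSaturated (hS : S ∈ rowStochastic R (α × β))
    (hp : IsSaturated S p) : ∃ b, Reaches (S * saturationMatrix S o) p (o, b) := by
  obtain ⟨q, hpq⟩ := exists_pos_of_mem_rowStochastic hS p
  exact ⟨q.2, .single (mul_saturationMatrix_apply_pos_of_isSaturated hS.1 hpq
    (hp.of_reaches (.single hpq)))⟩

theorem exists_reaches_mul_saturationMatrix_of_reaches (hS : ∀ p q, 0 ≤ S p q)
    (hpq : Reaches S p q) (hq : ∃ b, Reaches (S * saturationMatrix S o) q (o, b)) :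
    ∃ b, Reaches (S * saturationMatrix S o) p (o, b) := by
  induction hpq using ReflTransGen.head_induction_on with
  | refl => exact hq
  | @head p r hpr _ ih =>
    by_cases hr : IsSaturated S r
    · exact ⟨r.2, .single (mul_saturationMatrix_apply_pos_of_isSaturated hS hpr hr)⟩
    · obtain ⟨b, hb⟩ := ih
      exact ⟨b, .head (mul_saturationMatrix_apply_pos_of_not_isSaturated hS hpr hr) hb⟩

theorem exists_pow_mul_saturationMatrix_pos [PartialOrder β] (hS : S ∈ rowStochastic R (α × β))
    (hmono : ∀ p q, 0 < S p q → p.2 ≤ q.2) (p : α × β) :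
    ∃ (n : ℕ) (b : β), 0 < ((S * saturationMatrix S o) ^ n) p (o, b) := by
  have hSU := mul_saturationMatrix_mem_rowStochastic (o := o) hS
  obtain ⟨q, hpq, hq⟩ := exists_reaches_isSaturated hmono p
  obtain ⟨b, hb⟩ := exists_reaches_mul_saturationMatrix_of_reaches (o := o) hS.1 hpq
    (exists_reaches_mul_saturationMatrix_of_isSaturated hS hq)
  obtain ⟨n, hn⟩ := (reaches_iff_exists_pow_pos hSU.1).1 hb
  exact ⟨n, b, hn⟩

end Saturation

section SmallStep

variable {α β R : Type*} [DecidableEq β]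

/-- The small-step matrix of a big-step matrix `B`: the program state moves according to `B`, while
the accumulator is updated deterministically by `f`. The paper's `S` is the case `f a b = a ∪ b`. -/
def smallStep [Zero R] (f : α → β → β) (B : Matrix α α R) : Matrix (α × β) (α × β) R :=
  .of fun p q => if q.2 = f p.1 p.2 then B p.1 q.1 else 0

theorem smallStep_mem_rowStochastic [Fintype α] [Fintype β] [DecidableEq α] [Semiring R]
    [PartialOrder R] [IsOrderedRing R] {B : Matrix α α R} (hB : B ∈ rowStochastic R α)
    (f : α → β → β) : smallStep f B ∈ rowStochastic R (α × β) := by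
  refine mem_rowStochastic_iff_sum.2 ⟨fun p q => ?_, fun p => ?_⟩
  · exact ite_nonneg (nonneg_of_mem_rowStochastic hB) le_rfl
  · simp [smallStep, Fintype.sum_prod_type, sum_row_of_mem_rowStochastic hB]

theorem snd_le_of_smallStep_pos [Preorder β] [Zero R] [Preorder R] {f : α → β → β}
    (hf : ∀ a b, b ≤ f a b) (B : Matrix α α R) (p q : α × β) (h : 0 < smallStep f B p q) :
    p.2 ≤ q.2 := by
  have hq : q.2 = f p.1 p.2 := by
    by_contra hne
    simp [smallStep, hne] at h
  exact hq ▸ hf p.1 p.2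

theorem IsAbsorbing.smallStep [DecidableEq α] [Zero R] [One R] {B : Matrix α α R} {f : α → β → β}
    {o : α} {b : β} (ho : IsAbsorbing B o) (hf : f o b = b) :
    IsAbsorbing (smallStep f B) (o, b) := by
  rintro ⟨a', b'⟩
  simp [_root_.smallStep, hf, ho a', ← ite_and, and_comm]

end SmallStep

theorem SU_absorbing_chain_general {α β R : Type*} [Fintype α] [DecidableEq α] [Fintype β]
    [DecidableEq β] [PartialOrder β] [Semiring R] [PartialOrder R] [IsStrictOrderedRing R]
    {f : α → β → β} {o : α} (hf : ∀ a b, b ≤ f a b) (hfo : ∀ b, f o b = b) (B : Matrix α α R)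
    (hBnn : ∀ a a', 0 ≤ B a a') (hBrow : ∀ a, ∑ a', B a a' = 1)
    (hBo : ∀ c, B o c = if c = o then 1 else 0) (S U : Matrix (α × β) (α × β) R)
    (hS : ∀ a b a' b', S (a, b) (a', b') = if b' = f a b then B a a' else 0)
    (Saturated : α × β → Prop)
    (hSat : ∀ a b, Saturated (a, b) ↔
      ∀ (n : ℕ) (a' : α) (b' : β), 0 < (S ^ n) (a, b) (a', b') → b' = b)
    (hU : ∀ a b a' b', U (a, b) (a', b') =
      if b' = b ∧ ((Saturated (a, b) ∧ a' = o) ∨ (¬ Saturated (a, b) ∧ a' = a)) then 1 else 0) :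
    ((∀ p q, 0 ≤ (S * U) p q) ∧ (∀ p, ∑ q, (S * U) p q = 1)) ∧
    (∀ a b, ∃ (n : ℕ) (b' : β), 0 < ((S * U) ^ n) (a, b) (o, b') ∧
      (∀ s', (S * U) (o, b') s' = if s' = (o, b') then 1 else 0)) := by
  obtain rfl : S = smallStep f B := by
    ext ⟨a, b⟩ ⟨a', b'⟩
    exact hS a b a' b'
  have hS_stoch := smallStep_mem_rowStochastic (mem_rowStochastic_iff_sum.2 ⟨hBnn, hBrow⟩) f
  obtain rfl : U = saturationMatrix (smallStep f B) o := eq_saturationMatrix hS_stoch.1 hSat hU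
  refine ⟨mem_rowStochastic_iff_sum.1 (mul_saturationMatrix_mem_rowStochastic hS_stoch),
    fun a b => ?_⟩
  obtain ⟨n, b', hn⟩ :=
    exists_pow_mul_saturationMatrix_pos (o := o) hS_stoch (snd_le_of_smallStep_pos hf B) (a, b)
  have hS_abs : IsAbsorbing (smallStep f B) (o, b') := IsAbsorbing.smallStep hBo (hfo b')
  exact ⟨n, b', hn, hS_abs.mul (isAbsorbing_saturationMatrix _ o b')⟩

/-- `S·U` is an absorbing Markov chain: it is stochastic, and every state can reach an
absorbing state of the form `(∅, b')`. -/
theorem SU_absorbing_chain {Pk : Type*} [Fintype Pk] [DecidableEq Pk]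
    (B : Matrix (Finset Pk) (Finset Pk) ℝ)
    (hBnn : ∀ a a', 0 ≤ B a a')
    (hBrow : ∀ a, ∑ a', B a a' = 1)
    (hBempty : ∀ c, B ∅ c = if c = ∅ then 1 else 0)
    (S U : Matrix (Finset Pk × Finset Pk) (Finset Pk × Finset Pk) ℝ)
    (hS : ∀ a b a' b', S (a, b) (a', b') = if b' = a ∪ b then B a a' else 0)
    (Saturated : Finset Pk × Finset Pk → Prop)
    (hSat : ∀ a b, Saturated (a, b) ↔
      ∀ (n : ℕ) (a' b' : Finset Pk), 0 < (S ^ n) (a, b) (a', b') → b' = b)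
    (hU : ∀ a b a' b', U (a, b) (a', b') =
      if b' = b ∧ ((Saturated (a, b) ∧ a' = ∅) ∨ (¬ Saturated (a, b) ∧ a' = a))
      then 1 else 0) :
    ((∀ p q, 0 ≤ (S * U) p q) ∧ (∀ p : Finset Pk × Finset Pk, ∑ q, (S * U) p q = 1)) ∧
    (∀ a b : Finset Pk, ∃ (n : ℕ) (b' : Finset Pk),
      0 < ((S * U) ^ n) (a, b) ((∅ : Finset Pk), b') ∧
      (∀ s', (S * U) ((∅ : Finset Pk), b') s' =
        if s' = ((∅ : Finset Pk), b') then 1 else 0)) :=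
  SU_absorbing_chain_general (f := (· ∪ ·)) (fun _ _ => Finset.subset_union_right)
    Finset.empty_union B hBnn hBrow hBempty S U hS Saturated hSat hU
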